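/- arXiv:1612.06546 — 2 statements merged into one kernel-verified Lean document; each statement's English description precedes it below -/
import Mathlib

section
/- For every x ∈ [0, 1/2], one has ln 2 + h(x + 1/2) - 2·h(x/2 + 1/2) ≤ -x², where h is the binary entropy function measured in nats. -/
/-- The binary entropy function measured in nats (recall `Real.log 0 = 0` in Mathlib,
which implements the convention `0 · ln 0 = 0`). -/
noncomputable def binEnt (t : ℝ) : ℝ := -t * Real.log t - (1 - t) * Real.log (1 - t)

/-!
On `(0, 1)` we have `h''(t) = -1 / (t (1 - t)) ≤ -4`, so `h` is `4`-strongly concave on `[0, 1]`.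
Since `x / 2 + 1 / 2` is the midpoint of `1 / 2` and `x + 1 / 2`, and `h (1 / 2) = log 2`, the claim
is the midpoint inequality of strong concavity at these two points.
-/

open Real Set

theorem le_two_mul_midpoint_of_uniformConcaveOn {E : Type*} [NormedAddCommGroup E]
    [NormedSpace ℝ E] {s : Set E} {φ : ℝ → ℝ} {f : E → ℝ} (hf : UniformConcaveOn s φ f) {x y : E}
    (hx : x ∈ s) (hy : y ∈ s) : f x + f y + φ ‖x - y‖ / 2 ≤ 2 * f (midpoint ℝ x y) := by
  have h := hf.2 hx hy one_half_pos.le one_half_pos.le (add_halves 1)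
  have hmid : midpoint ℝ x y = (1 / 2 : ℝ) • x + (1 / 2 : ℝ) • y := by
    rw [midpoint_eq_smul_add, invOf_eq_inv, ← one_div, smul_add]
  rw [hmid]
  simp only [smul_eq_mul] at h
  linarith

theorem strongConcaveOn_of_hasDerivWithinAt2_le {s : Set ℝ} (hs : Convex ℝ s) {m : ℝ}
    {f f' f'' : ℝ → ℝ} (hf : ContinuousOn f s)
    (hf' : ∀ x ∈ interior s, HasDerivWithinAt f (f' x) (interior s) x)
    (hf'' : ∀ x ∈ interior s, HasDerivWithinAt f' (f'' x) (interior s) x)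
    (hf''_le : ∀ x ∈ interior s, f'' x ≤ -m) : StrongConcaveOn s m f := by
  simp only [strongConcaveOn_iff_convex, norm_eq_abs, sq_abs]
  refine concaveOn_of_hasDerivWithinAt2_nonpos (f' := fun x ↦ f' x + m * x)
    (f'' := fun x ↦ f'' x + m) hs (by fun_prop) (fun x hx ↦ ?_) (fun x hx ↦ ?_)
    fun x hx ↦ by linarith [hf''_le x hx]
  · exact ((hf' x hx).add ((hasDerivWithinAt_id x _).pow 2 |>.const_mul (m / 2))).congr_deriv
      (by simp only [id_eq]; ring)
  · exact ((hf'' x hx).add ((hasDerivWithinAt_id x _).const_mul m)).congr_deriv (by ring)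

theorem hasDerivAt_log_one_sub_sub_log {p : ℝ} (hp₀ : p ≠ 0) (hp₁ : p ≠ 1) :
    HasDerivAt (fun t ↦ log (1 - t) - log t) (-1 / (p * (1 - p))) p := by
  have hp : 1 - p ≠ 0 := sub_ne_zero.2 hp₁.symm
  refine ((((hasDerivAt_id p).const_sub 1).log hp).sub (hasDerivAt_log hp₀)).congr_deriv ?_
  simp only [id_eq]
  field_simp
  ring

theorem strongConcaveOn_binEntropy : StrongConcaveOn (Icc 0 1) 4 binEntropy := by
  refine strongConcaveOn_of_hasDerivWithinAt2_le (f' := fun p ↦ log (1 - p) - log p)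
    (f'' := fun p ↦ -1 / (p * (1 - p))) (convex_Icc 0 1) binEntropy_continuous.continuousOn ?_ ?_ ?_
    <;> rw [interior_Icc] <;> rintro p ⟨hp₀, hp₁⟩
  · exact (hasDerivAt_binEntropy hp₀.ne' hp₁.ne).hasDerivWithinAt
  · exact (hasDerivAt_log_one_sub_sub_log hp₀.ne' hp₁.ne).hasDerivWithinAt
  · have hpos : 0 < p * (1 - p) := mul_pos hp₀ (sub_pos.2 hp₁)
    rw [div_le_iff₀ hpos]
    linarith [sq_nonneg (2 * p - 1)]

theorem binEnt_eq_binEntropy : binEnt = binEntropy := by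
  ext t
  simp only [binEnt, binEntropy, log_inv]
  ring

theorem binEnt_one_half : binEnt (1 / 2) = log 2 := by
  rw [binEnt_eq_binEntropy, one_div, binEntropy_two_inv]

theorem stmt7_general {p q : ℝ} (hp : p ∈ Icc 0 1) (hq : q ∈ Icc 0 1) :
    binEnt p + binEnt q - 2 * binEnt ((p + q) / 2) ≤ -(q - p) ^ 2 := by
  have h := le_two_mul_midpoint_of_uniformConcaveOn strongConcaveOn_binEntropy hp hq
  rw [midpoint_eq_smul_add, invOf_eq_inv, smul_eq_mul, inv_mul_eq_div, norm_eq_abs, sq_abs] at h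
  rw [binEnt_eq_binEntropy]
  linarith

theorem stmt7 :
    ∀ x : ℝ, 0 ≤ x → x ≤ 1 / 2 →
      Real.log 2 + binEnt (x + 1 / 2) - 2 * binEnt (x / 2 + 1 / 2) ≤ -x ^ 2 := by
  intro x h0 h1
  rw [← binEnt_one_half]
  convert stmt7_general (p := 1 / 2) (q := x + 1 / 2) (by norm_num) ⟨by linarith, by linarith⟩
    using 3 <;> ring_nf
end

section
/- There exists a constant C > 0 such that for all sufficiently large m and every real number q, one has E_z[ | q - (Σ_{j=1}^m z_j)² | ] ≥ C·m, where the expectation is over z drawn uniformly at random from {-1,1}^m. -/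
/-- The sign value `±1` of a Boolean. -/
def sg (b : Bool) : ℝ := if b then 1 else -1

/-!
Split the Rademacher sum as `A + B` along a partition of the coordinates. Negating the signs in `B`
preserves the uniform measure and changes `(A + B) ^ 2` by `4 * A * B`, so no `q` can be close to
both values and `𝔼 |q - (A + B) ^ 2| ≥ 2 * 𝔼 |A * B| = 2 * 𝔼 |A| * 𝔼 |B|`. Each factor is bounded
below by Khintchine's inequality, which comes from the second and fourth moments by Hölder
interpolation.
-/

open Finset
open scoped BigOperators

section Interpolation

theorem sum_sq_pow_three_le {α R : Type*} [CommRing R] [LinearOrder R] [IsStrictOrderedRing R]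
    {f : α → R} (s : Finset α) (hf : ∀ i ∈ s, 0 ≤ f i) :
    (∑ i ∈ s, f i ^ 2) ^ 3 ≤ (∑ i ∈ s, f i) ^ 2 * ∑ i ∈ s, f i ^ 4 := by
  have h₁₃ : (∑ i ∈ s, f i ^ 2) ^ 2 ≤ (∑ i ∈ s, f i) * ∑ i ∈ s, f i ^ 3 :=
    sum_sq_le_sum_mul_sum_of_sq_le_mul s hf (fun i hi ↦ pow_nonneg (hf i hi) 3)
      fun i _ ↦ le_of_eq (by ring)
  have h₂₄ : (∑ i ∈ s, f i ^ 3) ^ 2 ≤ (∑ i ∈ s, f i ^ 2) * ∑ i ∈ s, f i ^ 4 :=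
    sum_sq_le_sum_mul_sum_of_sq_le_mul s (fun i _ ↦ sq_nonneg (f i))
      (fun i hi ↦ pow_nonneg (hf i hi) 4) fun i _ ↦ le_of_eq (by ring)
  obtain h₀ | h₀ := (sum_nonneg fun i (_ : i ∈ s) ↦ sq_nonneg (f i)).eq_or_lt
  · rw [← h₀, zero_pow three_ne_zero]
    exact mul_nonneg (sq_nonneg _) (sum_nonneg fun i hi ↦ pow_nonneg (hf i hi) 4)
  refine le_of_mul_le_mul_left ?_ h₀
  calc (∑ i ∈ s, f i ^ 2) * (∑ i ∈ s, f i ^ 2) ^ 3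
      = ((∑ i ∈ s, f i ^ 2) ^ 2) ^ 2 := by ring
    _ ≤ ((∑ i ∈ s, f i) * ∑ i ∈ s, f i ^ 3) ^ 2 := by gcongr
    _ = (∑ i ∈ s, f i) ^ 2 * (∑ i ∈ s, f i ^ 3) ^ 2 := mul_pow _ _ _
    _ ≤ (∑ i ∈ s, f i) ^ 2 * ((∑ i ∈ s, f i ^ 2) * ∑ i ∈ s, f i ^ 4) := by gcongr
    _ = (∑ i ∈ s, f i ^ 2) * ((∑ i ∈ s, f i) ^ 2 * ∑ i ∈ s, f i ^ 4) := by ring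

theorem expect_sq_pow_three_le {α K : Type*} [Field K] [LinearOrder K] [IsStrictOrderedRing K]
    {f : α → K} (s : Finset α) (hf : ∀ i ∈ s, 0 ≤ f i) :
    (𝔼 i ∈ s, f i ^ 2) ^ 3 ≤ (𝔼 i ∈ s, f i) ^ 2 * 𝔼 i ∈ s, f i ^ 4 := by
  simp only [expect_eq_sum_div_card]
  calc ((∑ i ∈ s, f i ^ 2) / #s) ^ 3 = (∑ i ∈ s, f i ^ 2) ^ 3 / #s ^ 3 := div_pow _ _ _
    _ ≤ ((∑ i ∈ s, f i) ^ 2 * ∑ i ∈ s, f i ^ 4) / #s ^ 3 := by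
      gcongr
      exact sum_sq_pow_three_le s hf
    _ = ((∑ i ∈ s, f i) / #s) ^ 2 * ((∑ i ∈ s, f i ^ 4) / #s) := by ring

end Interpolation

section Independence

variable {ι : Type*} [Fintype ι] [DecidableEq ι] {κ : ι → Type*} [∀ i, Fintype (κ i)]
  {R : Type*} [Semiring R] [Module ℚ≥0 R] [IsScalarTower ℚ≥0 R R] [SMulCommClass ℚ≥0 R R]

theorem expect_mul_of_dependsOn {s t : Finset ι} (hst : Disjoint s t) {f g : (∀ i, κ i) → R}
    (hf : DependsOn f s) (hg : DependsOn g t) :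
    𝔼 z, f z * g z = (𝔼 z, f z) * 𝔼 z, g z := by
  cases isEmpty_or_nonempty (∀ i, κ i)
  · simp [univ_eq_empty]
  -- Exchanging the coordinates in `s` between two independent samples turns `f z * g z` into
  -- `f w * g z`.
  let swap (p : (∀ i, κ i) × (∀ i, κ i)) := (s.piecewise p.2 p.1, s.piecewise p.1 p.2)
  have swap_involutive : Function.Involutive swap := fun p ↦ by
    ext i <;> by_cases hi : i ∈ s <;> simp [swap, hi]
  have hfg (p : (∀ i, κ i) × (∀ i, κ i)) : f p.2 * g p.1 = f (swap p).1 * g (swap p).1 := by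
    congr 1
    · exact hf fun i hi ↦ (s.piecewise_eq_of_mem _ _ hi).symm
    · exact hg fun i hi ↦ (s.piecewise_eq_of_notMem _ _ (disjoint_right.1 hst hi)).symm
  calc 𝔼 z, f z * g z = 𝔼 p : (∀ i, κ i) × (∀ i, κ i), f p.1 * g p.1 := by
        rw [← univ_product_univ, expect_product]
        simp only [Fintype.expect_const]
    _ = 𝔼 p : (∀ i, κ i) × (∀ i, κ i), f p.2 * g p.1 :=
        (Fintype.expect_equiv swap_involutive.toPerm _ _ hfg).symm
    _ = (𝔼 z, f z) * 𝔼 z, g z := by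
        rw [Fintype.expect_mul_expect, ← univ_product_univ, expect_product, expect_comm]

end Independence

theorem sg_not (b : Bool) : sg (!b) = -sg b := by cases b <;> simp [sg]

section RademacherSum

variable {ι E : Type*} [AddCommGroup E] [Module ℝ E]

/-- The Rademacher sum `∑ j ∈ s, ε j • v j` with signs `ε j = sg (z j)`. The sign vector `z` ranges
over the whole cube `ι → Bool`, so that sums over different `s` live on one probability space. -/
def rademacherSum (v : ι → E) (s : Finset ι) (z : ι → Bool) : E := ∑ j ∈ s, sg (z j) • v j

theorem dependsOn_rademacherSum (v : ι → E) (s : Finset ι) : DependsOn (rademacherSum v s) s :=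
  fun _ _ h ↦ sum_congr rfl fun j hj ↦ by rw [h j hj]

variable [DecidableEq ι]

theorem rademacherSum_union (v : ι → E) {s t : Finset ι} (hst : Disjoint s t) (z : ι → Bool) :
    rademacherSum v (s ∪ t) z = rademacherSum v s z + rademacherSum v t z :=
  sum_union hst

theorem rademacherSum_piecewise_not (v : ι → E) (s : Finset ι) (z : ι → Bool) :
    rademacherSum v s (s.piecewise (fun j ↦ !z j) z) = -rademacherSum v s z := by
  rw [rademacherSum, rademacherSum, ← sum_neg_distrib]
  refine sum_congr rfl fun j hj ↦ ?_
  rw [s.piecewise_eq_of_mem _ _ hj, sg_not, neg_smul]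

variable [Fintype ι]

theorem expect_comp_rademacherSum_sub (v : ι → E) {s t : Finset ι} (hst : Disjoint s t)
    (F : E → ℝ) :
    𝔼 z, F (rademacherSum v s z - rademacherSum v t z) =
      𝔼 z, F (rademacherSum v s z + rademacherSum v t z) := by
  let flip (z : ι → Bool) : ι → Bool := t.piecewise (fun j ↦ !z j) z
  have flip_involutive : Function.Involutive flip := fun z ↦ by
    ext i
    by_cases hi : i ∈ t <;> simp [flip, hi]
  refine Fintype.expect_equiv flip_involutive.toPerm _ _ fun z ↦ ?_
  have hs : rademacherSum v s (flip z) = rademacherSum v s z :=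
    dependsOn_rademacherSum v s fun i hi ↦ t.piecewise_eq_of_notMem _ _ (disjoint_left.1 hst hi)
  have ht : rademacherSum v t (flip z) = -rademacherSum v t z := rademacherSum_piecewise_not v t z
  rw [Function.Involutive.coe_toPerm, hs, ht, sub_eq_add_neg]

theorem expect_comp_rademacherSum_union (v : ι → E) {s t : Finset ι} (hst : Disjoint s t)
    (F : E → ℝ) :
    𝔼 z, F (rademacherSum v (s ∪ t) z) =
      𝔼 z, (F (rademacherSum v s z + rademacherSum v t z) +
        F (rademacherSum v s z - rademacherSum v t z)) / 2 := by
  simp only [rademacherSum_union v hst]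
  rw [← expect_div, expect_add_distrib, expect_comp_rademacherSum_sub v hst, add_self_div_two]

theorem expect_comp_rademacherSum_insert (v : ι → E) {i : ι} {s : Finset ι} (hi : i ∉ s)
    (F : E → ℝ) :
    𝔼 z, F (rademacherSum v (insert i s) z) =
      𝔼 z, (F (rademacherSum v s z + v i) + F (rademacherSum v s z - v i)) / 2 := by
  rw [insert_eq, union_comm,
    expect_comp_rademacherSum_union v (disjoint_singleton_right.2 hi)]
  refine expect_congr rfl fun z _ ↦ ?_
  cases h : z i <;> simp [rademacherSum, sg, h, sub_eq_add_neg, add_comm]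

end RademacherSum

section Khintchine

variable {E : Type*} [NormedAddCommGroup E] [InnerProductSpace ℝ E]

theorem norm_add_pow_four_add_norm_sub_pow_four_le (x y : E) :
    ‖x + y‖ ^ 4 + ‖x - y‖ ^ 4 ≤ 2 * (‖x‖ ^ 4 + 6 * (‖x‖ ^ 2 * ‖y‖ ^ 2) + ‖y‖ ^ 4) := by
  have h_inner : inner ℝ x y ^ 2 ≤ (‖x‖ * ‖y‖) ^ 2 :=
    sq_le_sq.2 ((abs_real_inner_le_norm x y).trans (le_abs_self _))
  calc ‖x + y‖ ^ 4 + ‖x - y‖ ^ 4 = (‖x + y‖ ^ 2) ^ 2 + (‖x - y‖ ^ 2) ^ 2 := by ring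
    _ = 2 * (‖x‖ ^ 2 + ‖y‖ ^ 2) ^ 2 + 8 * inner ℝ x y ^ 2 := by
      rw [norm_add_sq_real, norm_sub_sq_real]
      ring
    _ ≤ 2 * (‖x‖ ^ 2 + ‖y‖ ^ 2) ^ 2 + 8 * (‖x‖ * ‖y‖) ^ 2 := by gcongr
    _ = 2 * (‖x‖ ^ 4 + 6 * (‖x‖ ^ 2 * ‖y‖ ^ 2) + ‖y‖ ^ 4) := by ring

variable {ι : Type*} [Fintype ι] [DecidableEq ι] (v : ι → E) (s : Finset ι)

theorem expect_norm_rademacherSum_sq :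
    𝔼 z, ‖rademacherSum v s z‖ ^ 2 = ∑ j ∈ s, ‖v j‖ ^ 2 := by
  induction s using Finset.induction_on with
  | empty => simp [rademacherSum]
  | insert i s hi ih =>
    have parallelogram (x : E) :
        (‖x + v i‖ ^ 2 + ‖x - v i‖ ^ 2) / 2 = ‖x‖ ^ 2 + ‖v i‖ ^ 2 := by
      rw [norm_add_sq_real, norm_sub_sq_real]
      ring
    rw [expect_comp_rademacherSum_insert v hi (‖·‖ ^ 2)]
    simp only [parallelogram, expect_add_distrib, Fintype.expect_const]
    rw [ih, sum_insert hi, add_comm]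

theorem expect_norm_rademacherSum_pow_four_le :
    𝔼 z, ‖rademacherSum v s z‖ ^ 4 ≤ 3 * (∑ j ∈ s, ‖v j‖ ^ 2) ^ 2 := by
  induction s using Finset.induction_on with
  | empty => simp [rademacherSum]
  | insert i s hi ih =>
    rw [expect_comp_rademacherSum_insert v hi (‖·‖ ^ 4)]
    calc 𝔼 z, (‖rademacherSum v s z + v i‖ ^ 4 + ‖rademacherSum v s z - v i‖ ^ 4) / 2
        ≤ 𝔼 z, (‖rademacherSum v s z‖ ^ 4 + 6 * (‖rademacherSum v s z‖ ^ 2 * ‖v i‖ ^ 2) +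
            ‖v i‖ ^ 4) := expect_le_expect fun z _ ↦ by
          linarith [norm_add_pow_four_add_norm_sub_pow_four_le (rademacherSum v s z) (v i)]
      _ = 𝔼 z, ‖rademacherSum v s z‖ ^ 4 + 6 * ((∑ j ∈ s, ‖v j‖ ^ 2) * ‖v i‖ ^ 2) +
            ‖v i‖ ^ 4 := by
          simp only [expect_add_distrib, ← mul_expect, ← expect_mul, Fintype.expect_const,
            expect_norm_rademacherSum_sq]
      _ ≤ 3 * (∑ j ∈ s, ‖v j‖ ^ 2) ^ 2 + 6 * ((∑ j ∈ s, ‖v j‖ ^ 2) * ‖v i‖ ^ 2) +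
            3 * ‖v i‖ ^ 4 := by
          gcongr
          exact le_mul_of_one_le_left (by positivity) (by norm_num)
      _ = 3 * (∑ j ∈ insert i s, ‖v j‖ ^ 2) ^ 2 := by
          rw [sum_insert hi]
          ring

/-- **Khintchine's inequality** for the first moment, with a non-optimal constant. -/
theorem sqrt_sum_norm_sq_div_three_le_expect_norm_rademacherSum :
    √((∑ j ∈ s, ‖v j‖ ^ 2) / 3) ≤ 𝔼 z, ‖rademacherSum v s z‖ := by
  set V := ∑ j ∈ s, ‖v j‖ ^ 2
  set M := 𝔼 z, ‖rademacherSum v s z‖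
  have hM : 0 ≤ M := expect_nonneg fun z _ ↦ norm_nonneg _
  have interpolation : V ^ 3 ≤ M ^ 2 * (3 * V ^ 2) :=
    calc V ^ 3 = (𝔼 z, ‖rademacherSum v s z‖ ^ 2) ^ 3 := by rw [expect_norm_rademacherSum_sq]
      _ ≤ M ^ 2 * 𝔼 z, ‖rademacherSum v s z‖ ^ 4 :=
        expect_sq_pow_three_le univ fun z _ ↦ norm_nonneg _
      _ ≤ M ^ 2 * (3 * V ^ 2) := by
        gcongr
        exact expect_norm_rademacherSum_pow_four_le v s
  refine Real.sqrt_le_iff.2 ⟨hM, ?_⟩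
  obtain hV | hV : 0 = V ∨ 0 < V := (sum_nonneg fun j _ ↦ sq_nonneg ‖v j‖).eq_or_lt
  · rw [← hV, zero_div]
    exact sq_nonneg M
  · refine le_of_mul_le_mul_left ?_ (by positivity : 0 < 3 * V ^ 2)
    linarith

end Khintchine

section SquaredSum

variable {ι : Type*} [Fintype ι] [DecidableEq ι] (a : ι → ℝ) {s t : Finset ι}

theorem four_mul_abs_mul_abs_le_abs_add_abs (q x y : ℝ) :
    4 * (|x| * |y|) ≤ |q - (x + y) ^ 2| + |q - (x - y) ^ 2| :=
  calc 4 * (|x| * |y|) = |4 * (x * y)| := by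
        rw [abs_mul, abs_mul, abs_of_pos (four_pos : (0 : ℝ) < 4)]
    _ = |(q - (x - y) ^ 2) - (q - (x + y) ^ 2)| := by ring_nf
    _ ≤ |q - (x - y) ^ 2| + |q - (x + y) ^ 2| := abs_sub _ _
    _ = |q - (x + y) ^ 2| + |q - (x - y) ^ 2| := add_comm _ _

theorem two_mul_expect_abs_mul_expect_abs_le_expect_abs_sub_sq (hst : Disjoint s t) (q : ℝ) :
    2 * ((𝔼 z, |rademacherSum a s z|) * 𝔼 z, |rademacherSum a t z|) ≤
      𝔼 z, |q - rademacherSum a (s ∪ t) z ^ 2| := by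
  have hs : DependsOn (fun z ↦ |rademacherSum a s z|) s :=
    fun _ _ h ↦ congrArg abs (dependsOn_rademacherSum a s h)
  have ht : DependsOn (fun z ↦ |rademacherSum a t z|) t :=
    fun _ _ h ↦ congrArg abs (dependsOn_rademacherSum a t h)
  rw [← expect_mul_of_dependsOn hst hs ht, mul_expect,
    expect_comp_rademacherSum_union a hst fun x ↦ |q - x ^ 2|]
  refine expect_le_expect fun z _ ↦ ?_
  linarith [four_mul_abs_mul_abs_le_abs_add_abs q
    (rademacherSum a s z) (rademacherSum a t z)]

theorem sqrt_sum_sq_mul_sum_sq_le_expect_abs_sub_sq (hst : Disjoint s t) (q : ℝ) :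
    2 / 3 * √((∑ j ∈ s, a j ^ 2) * ∑ j ∈ t, a j ^ 2) ≤
      𝔼 z, |q - rademacherSum a (s ∪ t) z ^ 2| := by
  have khintchine (u : Finset ι) : √((∑ j ∈ u, a j ^ 2) / 3) ≤ 𝔼 z, |rademacherSum a u z| := by
    simpa only [Real.norm_eq_abs, sq_abs] using
      sqrt_sum_norm_sq_div_three_le_expect_norm_rademacherSum a u
  have sqrt_mul_div_nine (x y : ℝ) (hx : 0 ≤ x) : √(x * y) / 3 = √(x / 3) * √(y / 3) := by
    rw [← Real.sqrt_mul (by positivity), div_mul_div_comm, Real.sqrt_div' _ (by norm_num),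
      Real.sqrt_mul_self zero_le_three]
  calc 2 / 3 * √((∑ j ∈ s, a j ^ 2) * ∑ j ∈ t, a j ^ 2)
      = 2 * (√((∑ j ∈ s, a j ^ 2) / 3) * √((∑ j ∈ t, a j ^ 2) / 3)) := by
        rw [← sqrt_mul_div_nine _ _ (sum_nonneg fun j _ ↦ sq_nonneg (a j))]
        ring
    _ ≤ 2 * ((𝔼 z, |rademacherSum a s z|) * 𝔼 z, |rademacherSum a t z|) := by
        gcongr <;> exact khintchine _
    _ ≤ 𝔼 z, |q - rademacherSum a (s ∪ t) z ^ 2| :=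
        two_mul_expect_abs_mul_expect_abs_le_expect_abs_sub_sq a hst q

end SquaredSum

theorem stmt13 :
    ∃ C > (0 : ℝ), ∃ m₀ : ℕ, ∀ m ≥ m₀, ∀ q : ℝ,
      (1 / 2 ^ m) * ∑ z : Fin m → Bool, |q - (∑ j, sg (z j)) ^ 2| ≥ C * m := by
  refine ⟨2 / 9, by norm_num, 2, fun m hm q ↦ ?_⟩
  obtain ⟨s, -, hs⟩ : ∃ s ⊆ (univ : Finset (Fin m)), #s = m / 2 :=
    exists_subset_card_eq (by simp [Nat.div_le_self])
  have hsc : #sᶜ = m - m / 2 := by rw [card_compl, Fintype.card_fin, hs]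
  have m_le_card : (m : ℝ) ≤ 3 * #s := by exact_mod_cast (by omega : m ≤ 3 * #s)
  have m_le_card_compl : (m : ℝ) ≤ 3 * #sᶜ := by exact_mod_cast (by omega : m ≤ 3 * #sᶜ)
  have m_le_sqrt : (m : ℝ) / 3 ≤ √(#s * #sᶜ) := Real.le_sqrt_of_sq_le <| by
    linarith [mul_le_mul m_le_card m_le_card_compl (by positivity) (by positivity)]
  calc (2 / 9 : ℝ) * m ≤ 2 / 3 * √(#s * #sᶜ) := by linarith
    _ ≤ 𝔼 z : Fin m → Bool, |q - (∑ j, sg (z j)) ^ 2| := by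
      simpa [rademacherSum] using
        sqrt_sum_sq_mul_sum_sq_le_expect_abs_sub_sq 1 (disjoint_compl_right (a := s)) q
    _ = (1 / 2 ^ m) * ∑ z : Fin m → Bool, |q - (∑ j, sg (z j)) ^ 2| := by
      simp [Fintype.expect_eq_sum_div_card, div_eq_inv_mul]
end
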